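/- Let t be a univariate polynomial of degree p with t'(0) < 0 and suppose R₊ = {α > 0 : t'(α) = 0 or t''(α)α - p t'(α) = 0} is nonempty with smallest element ᾱ, which is a simple root of the relevant polynomial. Then every α ∈ (0, ᾱ) is a persistent regularized minimizer of t, and every persistent regularized minimizer of t lies in (0, ᾱ]. -/

import Mathlib

/-- A minimizer curve of the family of regularized models `m σ`. -/
def IsMinimizerCurve (m : ℝ → ℝ → ℝ) (I : Set ℝ) (ψ : ℝ → ℝ) : Prop :=
  I ⊆ Set.Ici 0 ∧ I.OrdConnected ∧ ContinuousOn ψ I ∧ ∀ σ ∈ I, IsLocalMin (m σ) (ψ σ)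

/-- A maximal minimizer curve: it cannot be extended to a strictly larger interval. -/
def IsMaximalMinimizerCurve (m : ℝ → ℝ → ℝ) (I : Set ℝ) (ψ : ℝ → ℝ) : Prop :=
  IsMinimizerCurve m I ψ ∧
  ∀ (J : Set ℝ) (φ : ℝ → ℝ), IsMinimizerCurve m J φ → I ⊆ J →
    (∀ σ ∈ I, φ σ = ψ σ) → J = I

/-- A persistent regularized minimizer: lies on a persistent maximal minimizer curve. -/
def IsPersistentRegMin (m : ℝ → ℝ → ℝ) (α : ℝ) : Prop :=
  ∃ (I : Set ℝ) (ψ : ℝ → ℝ), IsMaximalMinimizerCurve m I ψ ∧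
    (∃ c : ℝ, 0 ≤ c ∧ Set.Ioi c ⊆ I) ∧ ∃ σ ∈ I, ψ σ = α

/-!
For `s > 0` the point `s` is critical for the model at exactly one weight, `G s = -t'(s) / s ^ p`,
and `s ^ (p + 1) * G' s = -(t''(s) s - p t'(s))`. Since `t'(0) < 0`, the function `G` tends to
infinity at `0⁺`, and up to the first element `ᾱ` of `R₊` it stays nonnegative and strictly
decreasing. Its inverse on `(0, ᾱ)` is therefore a minimizer curve over `(G ᾱ, ∞)`, and by Zorn's
lemma it extends to a maximal one.

Conversely, the growth bound on `t'` forces every minimizer of the model into `(0, ᾱ)` once the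
weight is large. A persistent curve never meets `0`, which is critical for no weight, so it stays
positive and is an inverse of `G`. Going back to smaller weights it cannot rise above `ᾱ`: there
either `G ᾱ = 0`, and no nonnegative weight is left, or `G` starts to increase.
-/

open Set Filter Topology Asymptotics Bornology Polynomial

section RealAnalysis

theorem pos_of_ne_zero_of_isPreconnected {X : Type*} [TopologicalSpace X] {s : Set X} {f : X → ℝ}
    (hs : IsPreconnected s) (hf : ContinuousOn f s) (hne : ∀ x ∈ s, f x ≠ 0) {x₀ : X} (hx₀ : x₀ ∈ s)
    (hfx₀ : 0 < f x₀) {x : X} (hx : x ∈ s) : 0 < f x := by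
  by_contra! hfx
  obtain ⟨y, hy, hy0⟩ := hs.intermediate_value hx hx₀ hf ⟨hfx, hfx₀.le⟩
  exact hne y hy hy0

theorem pos_on_Ioo_of_ne_zero {f : ℝ → ℝ} {a b : ℝ} (hf : ContinuousOn f (Ico a b))
    (ha : 0 < f a) (hne : ∀ x ∈ Ioo a b, f x ≠ 0) : ∀ x ∈ Ioo a b, 0 < f x := by
  refine fun x hx ↦ pos_of_ne_zero_of_isPreconnected isPreconnected_Ico hf (fun y hy ↦ ?_)
    (left_mem_Ico.2 (hx.1.trans hx.2)) ha (Ioo_subset_Ico_self hx)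
  rcases hy.1.eq_or_lt with rfl | hay
  · exact ha.ne'
  · exact hne y ⟨hay, hy.2⟩

theorem eventually_neg_nhdsGT_of_frequently_nonneg_nhdsLT {f : ℝ → ℝ} {d a : ℝ}
    (hf : HasDerivAt f d a) (hd : d ≠ 0) (ha : f a = 0) (hleft : ∃ᶠ x in 𝓝[<] a, 0 ≤ f x) :
    ∀ᶠ x in 𝓝[>] a, f x < 0 := by
  rcases hd.lt_or_gt with hd | hd
  · have hsign := eventually_nhdsWithin_sign_eq_of_deriv_neg (hf.deriv.trans_lt hd) ha
    filter_upwards [nhdsWithin_le_nhds hsign, self_mem_nhdsWithin] with x hx hax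
    rwa [sign_neg (sub_neg.2 hax), sign_eq_neg_one_iff] at hx
  · have hsign := eventually_nhdsWithin_sign_eq_of_deriv_pos (hd.trans_eq hf.deriv.symm) ha
    refine absurd ?_ hleft
    filter_upwards [nhdsWithin_le_nhds hsign, self_mem_nhdsWithin] with x hx hxa
    rw [sign_neg (sub_neg.2 hxa), sign_eq_neg_one_iff] at hx
    exact hx.not_ge

theorem continuousOn_invFunOn_of_strictAntiOn {α β : Type*} [LinearOrder α] [TopologicalSpace α]
    [OrderTopology α] [DenselyOrdered α] [Nonempty α] [LinearOrder β] [TopologicalSpace β]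
    [OrderTopology β] {G : α → β} {s : Set α} (hG : StrictAntiOn G s) (hs : IsOpen s)
    (himage : IsOpen (G '' s)) : ContinuousOn (Function.invFunOn G s) (G '' s) := by
  have hleft : LeftInvOn (Function.invFunOn G s) G s := hG.injOn.leftInvOn_invFunOn
  have hanti : AntitoneOn (Function.invFunOn G s) (G '' s) := by
    rintro _ ⟨x, hx, rfl⟩ _ ⟨y, hy, rfl⟩ hxy
    rw [hleft hx, hleft hy]
    exact (hG.le_iff_ge hx hy).1 hxy
  rintro _ ⟨x, hx, rfl⟩
  have hnhds : G '' s ∈ 𝓝 (G x) := himage.mem_nhds (mem_image_of_mem G hx)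
  refine ContinuousAt.continuousWithinAt ?_
  refine continuousAt_of_monotoneOn_of_image_mem_nhds (β := αᵒᵈ) hanti.dual_right hnhds ?_
  change Function.invFunOn G s '' (G '' s) ∈ 𝓝 (Function.invFunOn G s (G x))
  rw [hleft.image_image, hleft hx]
  exact hs.mem_nhds hx

theorem eventually_neg_nhdsGT_of_simple_zero {f : ℝ → ℝ} {d a b : ℝ} (hab : a < b)
    (hf : ContinuousOn f (Ico a b)) (ha : 0 < f a) (hne : ∀ x ∈ Ioo a b, f x ≠ 0) (hb : f b = 0)
    (hderiv : HasDerivAt f d b) (hd : d ≠ 0) : ∀ᶠ x in 𝓝[>] b, f x < 0 := by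
  refine eventually_neg_nhdsGT_of_frequently_nonneg_nhdsLT hderiv hd hb (Eventually.frequently ?_)
  filter_upwards [Ioo_mem_nhdsLT hab] with x hx
  exact (pos_on_Ioo_of_ne_zero hf ha hne x hx).le

theorem strictAntiOn_of_leftInvOn_of_continuousOn {α β : Type*} [ConditionallyCompleteLinearOrder α]
    [DenselyOrdered α] [TopologicalSpace α] [OrderTopology α] [LinearOrder β] [TopologicalSpace β]
    [OrderClosedTopology β] {G : β → α} {ψ : α → β} {a b : α} (hab : a ≤ b)
    (hψ : ContinuousOn ψ (Icc a b)) (hG : LeftInvOn G ψ (Icc a b)) (hle : ψ b ≤ ψ a) :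
    StrictAntiOn G (Icc (ψ b) (ψ a)) := by
  have hanti := hψ.strictAntiOn_of_injOn_Icc hab hle hG.injOn
  intro x hx y hy hxy
  obtain ⟨σ, hσ, rfl⟩ := intermediate_value_Icc' hab hψ hx
  obtain ⟨τ, hτ, rfl⟩ := intermediate_value_Icc' hab hψ hy
  rw [hG hσ, hG hτ]
  exact (hanti.lt_iff_gt hσ hτ).1 hxy

theorem exists_forall_abs_le_mul_rpow_of_isBigO {g : ℝ → ℝ} {p δ : ℝ} (hg : Continuous g)
    (hO : g =O[cobounded ℝ] fun s ↦ |s| ^ p) (hδ : 0 < δ) :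
    ∃ M, ∀ s, δ ≤ |s| → |g s| ≤ M * |s| ^ p := by
  have hpow {s : ℝ} (hs : δ ≤ |s|) : 0 < |s| ^ p := Real.rpow_pos_of_pos (hδ.trans_le hs) p
  obtain ⟨C, hC⟩ := hO.bound
  rw [Metric.cobounded_eq_cocompact] at hC
  obtain ⟨K, hK, hKC⟩ := mem_cocompact.1 hC
  have hcompact : IsCompact (K ∩ {s | δ ≤ |s|}) :=
    hK.inter_right (isClosed_le continuous_const continuous_abs)
  have hquot : ContinuousOn (fun s ↦ g s / |s| ^ p) (K ∩ {s | δ ≤ |s|}) := by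
    refine hg.continuousOn.div (continuous_abs.continuousOn.rpow_const fun s hs ↦ ?_) fun s hs ↦ ?_
    · exact Or.inl (hδ.trans_le hs.2).ne'
    · exact (hpow hs.2).ne'
  obtain ⟨D, hD⟩ := hcompact.exists_bound_of_continuousOn hquot
  refine ⟨max C D, fun s hs ↦ ?_⟩
  by_cases hsK : s ∈ K
  · have hquot_le := hD s ⟨hsK, hs⟩
    rw [norm_div, Real.norm_of_nonneg (hpow hs).le, div_le_iff₀ (hpow hs)] at hquot_le
    exact hquot_le.trans (mul_le_mul_of_nonneg_right (le_max_right C D) (hpow hs).le)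
  · have hle : ‖g s‖ ≤ C * ‖|s| ^ p‖ := hKC hsK
    rw [Real.norm_of_nonneg (hpow hs).le] at hle
    exact hle.trans (mul_le_mul_of_nonneg_right (le_max_left C D) (hpow hs).le)

theorem isBigO_cobounded_abs_rpow_of_natDegree_le {P : ℝ[X]} {n : ℕ} (hP : P.natDegree ≤ n) :
    (fun s ↦ P.eval s) =O[cobounded ℝ] fun s ↦ |s| ^ (n : ℝ) := by
  have hO := isBigO_cobounded_of_degree_le (P := P) (Q := X ^ n)
    ((degree_le_of_natDegree_le hP).trans_eq (degree_X_pow n).symm)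
  simpa only [eval_pow, eval_X, Real.rpow_natCast, ← abs_pow] using hO.abs_right

end RealAnalysis

section MaximalExtension

theorem exists_Ici_mem_nhdsWithin {α : Type*} [LinearOrder α] [TopologicalSpace α]
    [OrderTopology α] {s : Set α} {x : α} (hx : x ∈ s) : ∃ a ∈ s, Ici a ∈ 𝓝[s] x := by
  by_cases! h : ∃ a ∈ s, a < x
  · obtain ⟨a, ha, hax⟩ := h
    exact ⟨a, ha, nhdsWithin_le_nhds (Ici_mem_nhds hax)⟩
  · exact ⟨x, hx, mem_of_superset self_mem_nhdsWithin h⟩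

theorem exists_Icc_mem_nhdsWithin {α : Type*} [LinearOrder α] [TopologicalSpace α]
    [OrderTopology α] {s : Set α} {x : α} (hx : x ∈ s) :
    ∃ a ∈ s, ∃ b ∈ s, Icc a b ∈ 𝓝[s] x := by
  obtain ⟨a, ha, hax⟩ := exists_Ici_mem_nhdsWithin hx
  obtain ⟨b, hb, hbx⟩ := exists_Ici_mem_nhdsWithin (α := αᵒᵈ) hx
  exact ⟨a, ha, b, hb, inter_mem hax hbx⟩

variable {m : ℝ → ℝ → ℝ}

theorem IsMinimizerCurve.exists_iUnion {ι : Type*} {I : ι → Set ℝ} {ψ : ι → ℝ → ℝ}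
    (h : ∀ i, IsMinimizerCurve m (I i) (ψ i)) (hdir : Directed (· ⊆ ·) I)
    (hagree : ∀ i j, EqOn (ψ i) (ψ j) (I i ∩ I j)) :
    ∃ φ, IsMinimizerCurve m (⋃ i, I i) φ ∧ ∀ i, EqOn φ (ψ i) (I i) := by
  classical
  have hcommon : ∀ σ ∈ ⋃ i, I i, ∀ τ ∈ ⋃ i, I i, ∃ k, σ ∈ I k ∧ τ ∈ I k := by
    intro σ hσ τ hτ
    obtain ⟨i, hi⟩ := mem_iUnion.1 hσ
    obtain ⟨j, hj⟩ := mem_iUnion.1 hτ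
    obtain ⟨k, hik, hjk⟩ := hdir i j
    exact ⟨k, hik hi, hjk hj⟩
  let φ : ℝ → ℝ := fun σ ↦ if hσ : ∃ i, σ ∈ I i then ψ hσ.choose σ else 0
  have hφ (i : ι) : EqOn φ (ψ i) (I i) := by
    intro σ hσ
    have hex : ∃ i, σ ∈ I i := ⟨i, hσ⟩
    simpa only [φ, dif_pos hex] using hagree hex.choose i ⟨hex.choose_spec, hσ⟩
  have hI0 : ⋃ i, I i ⊆ Ici 0 := iUnion_subset fun i ↦ (h i).1
  refine ⟨φ, ⟨hI0, ⟨fun σ hσ τ hτ ↦ ?_⟩, fun σ hσ ↦ ?_, fun σ hσ ↦ ?_⟩, hφ⟩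
  · obtain ⟨k, hσk, hτk⟩ := hcommon σ hσ τ hτ
    exact ((h k).2.1.out hσk hτk).trans (subset_iUnion I k)
  · obtain ⟨a, ha, b, hb, hab⟩ := exists_Icc_mem_nhdsWithin hσ
    obtain ⟨k, hak, hbk⟩ := hcommon a ha b hb
    have hIk : I k ∈ 𝓝[⋃ i, I i] σ := mem_of_superset hab ((h k).2.1.out hak hbk)
    have hcont : ContinuousOn φ (I k) := (h k).2.2.1.congr (hφ k)
    exact (hcont σ (mem_of_mem_nhdsWithin hσ hIk)).mono_of_mem_nhdsWithin hIk
  · obtain ⟨i, hi⟩ := mem_iUnion.1 hσ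
    rw [hφ i hi]
    exact (h i).2.2.2 σ hi

theorem IsMinimizerCurve.exists_isMaximalMinimizerCurve {I : Set ℝ} {ψ : ℝ → ℝ}
    (h : IsMinimizerCurve m I ψ) :
    ∃ J φ, IsMaximalMinimizerCurve m J φ ∧ I ⊆ J ∧ EqOn φ ψ I := by
  let Extension := {x : Set ℝ × (ℝ → ℝ) // IsMinimizerCurve m x.1 x.2 ∧ I ⊆ x.1 ∧ EqOn x.2 ψ I}
  let r : Extension → Extension → Prop := fun x y ↦ x.1.1 ⊆ y.1.1 ∧ EqOn y.1.2 x.1.2 x.1.1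
  have hrefl (x : Extension) : r x x := ⟨Subset.rfl, fun _ _ ↦ rfl⟩
  have htrans {x y z : Extension} (hxy : r x y) (hyz : r y z) : r x z :=
    ⟨hxy.1.trans hyz.1, (hyz.2.mono hxy.1).trans hxy.2⟩
  have hbound : ∀ c, IsChain r c → c.Nonempty → ∃ y, ∀ x ∈ c, r x y := by
    rintro c hc ⟨x₀, hx₀⟩
    have htotal (x y : c) : r x y ∨ r y x := by
      by_cases hxy : x = y
      · exact Or.inl (hxy ▸ hrefl x)
      · exact hc x.2 y.2 (Subtype.coe_injective.ne hxy)
    obtain ⟨φ, hφ, hφc⟩ := exists_iUnion (I := fun x : c ↦ x.1.1.1) (fun x ↦ x.1.2.1)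
      (fun x y ↦ (htotal x y).elim (fun hxy ↦ ⟨y, hxy.1, Subset.rfl⟩)
        fun hyx ↦ ⟨x, Subset.rfl, hyx.1⟩)
      (fun x y σ hσ ↦ (htotal x y).elim (fun hxy ↦ (hxy.2 hσ.1).symm) fun hyx ↦ hyx.2 hσ.2)
    have hIx₀ := x₀.2.2.1
    have hx₀c := subset_iUnion (fun x : c ↦ x.1.1.1) ⟨x₀, hx₀⟩
    have hφψ : EqOn φ ψ I := ((hφc ⟨x₀, hx₀⟩).mono hIx₀).trans x₀.2.2.2
    exact ⟨⟨(_, φ), hφ, hIx₀.trans hx₀c, hφψ⟩,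
      fun x hx ↦ ⟨subset_iUnion (fun x : c ↦ x.1.1.1) ⟨x, hx⟩, hφc ⟨x, hx⟩⟩⟩
  have : Nonempty Extension := ⟨⟨(I, ψ), h, Subset.rfl, fun _ _ ↦ rfl⟩⟩
  obtain ⟨⟨⟨J, φ⟩, hφ, hIJ, hφψ⟩, hmax⟩ := exists_maximal_of_nonempty_chains_bounded hbound htrans
  refine ⟨J, φ, ⟨hφ, fun K χ hχ hJK hχφ ↦ ?_⟩, hIJ, hφψ⟩
  have hKJ := hmax ⟨(K, χ), hχ, hIJ.trans hJK, (EqOn.mono hIJ hχφ).trans hφψ⟩ ⟨hJK, hχφ⟩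
  exact hKJ.1.antisymm hJK

end MaximalExtension

/-- The model of `f` at weight `σ`, regularized by a power of order `p + 1`; the exponent `p` is
real. -/
noncomputable def regModel (f : ℝ → ℝ) (p σ s : ℝ) : ℝ :=
  f s + σ / (p + 1) * |s| ^ (p + 1)

/-- The only weight `σ` for which the point `s > 0` can be critical for `regModel f p σ`, where `f'`
is the derivative of `f`. -/
noncomputable def regWeight (f' : ℝ → ℝ) (p s : ℝ) : ℝ :=
  -f' s / s ^ p

section RegModel

variable {f f' f'' : ℝ → ℝ} {p a : ℝ}

theorem abs_rpow_sub_one_mul_self {s : ℝ} (hs : 0 < s) (p : ℝ) : |s| ^ (p - 1) * s = s ^ p := by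
  rw [abs_of_pos hs, ← Real.rpow_add_one hs.ne', sub_add_cancel]

theorem regModel_natCast (f : ℝ → ℝ) (n : ℕ) :
    regModel f n = fun σ s ↦ f s + σ / ((n : ℝ) + 1) * |s| ^ (n + 1) := by
  funext σ s
  rw [regModel, ← Nat.cast_succ, Real.rpow_natCast]

theorem hasDerivAt_regModel {d s : ℝ} (hp : 0 < p) (hf : HasDerivAt f d s) (σ : ℝ) :
    HasDerivAt (regModel f p σ) (d + σ * (|s| ^ (p - 1) * s)) s := by
  have hpow := (hasDerivAt_abs_rpow s (p := p + 1) (by linarith)).const_mul (σ / (p + 1))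
  refine (hf.add hpow).congr_deriv ?_
  rw [show p + 1 - 2 = p - 1 by ring]
  field_simp

theorem add_eq_zero_of_isLocalMin_regModel {d s σ : ℝ} (hp : 0 < p) (hf : HasDerivAt f d s)
    (h : IsLocalMin (regModel f p σ) s) : d + σ * (|s| ^ (p - 1) * s) = 0 :=
  h.hasDerivAt_eq_zero (hasDerivAt_regModel hp hf σ)

theorem regWeight_eq_of_isLocalMin_regModel {s σ : ℝ} (hp : 0 < p) (hf : HasDerivAt f (f' s) s)
    (hs : 0 < s) (h : IsLocalMin (regModel f p σ) s) : regWeight f' p s = σ := by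
  have hcrit := add_eq_zero_of_isLocalMin_regModel hp hf h
  rw [abs_rpow_sub_one_mul_self hs] at hcrit
  rw [regWeight, div_eq_iff (Real.rpow_pos_of_pos hs p).ne']
  linarith

theorem hasDerivAt_regWeight {d s : ℝ} (hs : 0 < s) (hf' : HasDerivAt f' d s) :
    HasDerivAt (regWeight f' p) (-(d * s - p * f' s) / s ^ (p + 1)) s := by
  have hpow := (Real.rpow_pos_of_pos hs p).ne'
  refine (hf'.neg.div (Real.hasDerivAt_rpow_const (Or.inl hs.ne')) hpow).congr_deriv ?_
  rw [Real.rpow_add_one hs.ne', Real.rpow_sub_one hs.ne']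
  field_simp
  simp only [Pi.neg_apply]
  ring

theorem continuousOn_regWeight (hf' : Continuous f') : ContinuousOn (regWeight f' p) (Ioi 0) :=
  hf'.neg.continuousOn.div
    (continuousOn_id.rpow_const fun _ hs ↦ Or.inl (ne_of_gt (mem_Ioi.1 hs)))
    fun _ hs ↦ (Real.rpow_pos_of_pos hs p).ne'

theorem tendsto_regWeight_nhdsGT_zero (hp : 0 < p) (hf' : ContinuousAt f' 0) (h0 : f' 0 < 0) :
    Tendsto (regWeight f' p) (𝓝[>] 0) atTop :=
  Tendsto.pos_mul_atTop (neg_pos.2 h0) (hf'.neg.tendsto.mono_left nhdsWithin_le_nhds) <|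
    (tendsto_rpow_neg_nhdsGT_zero (neg_neg_of_pos hp)).congr' <|
      eventually_mem_nhdsWithin.mono fun _ hs ↦ Real.rpow_neg (le_of_lt hs) p

theorem strictAntiOn_regWeight (hf' : ∀ s, HasDerivAt f' (f'' s) s)
    (hpos : ∀ s ∈ Ioo 0 a, 0 < f'' s * s - p * f' s) : StrictAntiOn (regWeight f' p) (Ioc 0 a) := by
  have hcont : Continuous f' := continuous_iff_continuousAt.2 fun s ↦ (hf' s).continuousAt
  refine strictAntiOn_of_deriv_neg (convex_Ioc 0 a)
    ((continuousOn_regWeight hcont).mono Ioc_subset_Ioi_self) fun s hs ↦ ?_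
  rw [interior_Ioc] at hs
  rw [(hasDerivAt_regWeight hs.1 (hf' s)).deriv]
  exact div_neg_of_neg_of_pos (neg_neg_of_pos (hpos s hs)) (Real.rpow_pos_of_pos hs.1 _)

theorem eventually_regWeight_lt_nhdsGT (hf' : ∀ s, HasDerivAt f' (f'' s) s) (ha : 0 < a)
    (hneg : ∀ᶠ s in 𝓝[>] a, f'' s * s - p * f' s < 0) :
    ∀ᶠ s in 𝓝[>] a, regWeight f' p a < regWeight f' p s := by
  have hcont : Continuous f' := continuous_iff_continuousAt.2 fun s ↦ (hf' s).continuousAt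
  obtain ⟨b, hab, hb⟩ := mem_nhdsGT_iff_exists_Ioo_subset.1 hneg
  have hmono : StrictMonoOn (regWeight f' p) (Ico a b) := by
    refine strictMonoOn_of_deriv_pos (convex_Ico a b)
      ((continuousOn_regWeight hcont).mono fun s hs ↦ ha.trans_le hs.1) fun s hs ↦ ?_
    rw [interior_Ico] at hs
    have hs0 : 0 < s := ha.trans hs.1
    rw [(hasDerivAt_regWeight hs0 (hf' s)).deriv]
    exact div_pos (neg_pos.2 (hb hs)) (Real.rpow_pos_of_pos hs0 _)
  filter_upwards [Ioo_mem_nhdsGT hab] with s hs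
  exact hmono (left_mem_Ico.2 hab) (Ioo_subset_Ico_self hs) hs.1

theorem image_regWeight_Ioo (hp : 0 < p) (hf' : Continuous f') (h0 : f' 0 < 0) (ha : 0 < a)
    (hanti : StrictAntiOn (regWeight f' p) (Ioc 0 a)) :
    regWeight f' p '' Ioo 0 a = Ioi (regWeight f' p a) := by
  refine Subset.antisymm ?_ ?_
  · rintro _ ⟨s, hs, rfl⟩
    exact hanti (Ioo_subset_Ioc_self hs) (right_mem_Ioc.2 ha) hs.2
  · have hcont := continuousOn_regWeight (p := p) hf'
    have hlim_a : Tendsto (regWeight f' p) (𝓝[<] a) (𝓝 (regWeight f' p a)) :=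
      (hcont.continuousAt (Ioi_mem_nhds ha)).tendsto.mono_left nhdsWithin_le_nhds
    have hlim_zero := tendsto_regWeight_nhdsGT_zero hp hf'.continuousAt h0
    exact isPreconnected_Ioo.intermediate_value_Ioi (le_principal_iff.2 (Ioo_mem_nhdsLT ha))
      (le_principal_iff.2 (Ioo_mem_nhdsGT ha)) (hcont.mono Ioo_subset_Ioi_self) hlim_a hlim_zero

/- On `(0, a)` the model at weight `regWeight f' p x` has derivative
`s ^ p * (regWeight f' p x - regWeight f' p s)`, which changes sign from `-` to `+` at `x`. -/
theorem isLocalMin_regModel_of_antitoneOn_regWeight (hp : 0 < p) (hf : ∀ s, HasDerivAt f (f' s) s)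
    (hanti : AntitoneOn (regWeight f' p) (Ioo 0 a)) {x : ℝ} (hx : x ∈ Ioo 0 a) :
    IsLocalMin (regModel f p (regWeight f' p x)) x := by
  have hmodel (s : ℝ) := hasDerivAt_regModel hp (hf s) (regWeight f' p x)
  have hderiv {s : ℝ} (hs : 0 < s) : deriv (regModel f p (regWeight f' p x)) s =
      s ^ p * (regWeight f' p x - regWeight f' p s) := by
    have hpow := (Real.rpow_pos_of_pos hs p).ne'
    rw [(hmodel s).deriv, abs_rpow_sub_one_mul_self hs, mul_sub, regWeight, regWeight]
    field_simp
    ring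
  refine isLocalMin_of_deriv_Ioo hx.1 hx.2 (hmodel x).continuousAt
    (fun s _ ↦ (hmodel s).differentiableAt.differentiableWithinAt)
    (fun s _ ↦ (hmodel s).differentiableAt.differentiableWithinAt) (fun s hs ↦ ?_) fun s hs ↦ ?_
  · rw [hderiv hs.1]
    have hle := hanti ⟨hs.1, hs.2.trans hx.2⟩ hx hs.2.le
    exact mul_nonpos_of_nonneg_of_nonpos (Real.rpow_nonneg hs.1.le p) (sub_nonpos.2 hle)
  · have hs0 := hx.1.trans hs.1
    rw [hderiv hs0]
    have hle := hanti hx ⟨hs0, hs.2⟩ hs.1.le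
    exact mul_nonneg (Real.rpow_nonneg hs0.le p) (sub_nonneg.2 hle)

theorem isMinimizerCurve_invFunOn_regWeight (hp : 0 < p) (hf : ∀ s, HasDerivAt f (f' s) s)
    (hf' : Continuous f') (h0 : f' 0 < 0) (ha : 0 < a) (hfa : f' a ≤ 0)
    (hanti : StrictAntiOn (regWeight f' p) (Ioc 0 a)) :
    IsMinimizerCurve (regModel f p) (Ioi (regWeight f' p a))
      (Function.invFunOn (regWeight f' p) (Ioo 0 a)) := by
  have himage := image_regWeight_Ioo hp hf' h0 ha hanti
  have hanti_Ioo := hanti.mono Ioo_subset_Ioc_self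
  have hweight : 0 ≤ regWeight f' p a := div_nonneg (neg_nonneg.2 hfa) (Real.rpow_nonneg ha.le p)
  refine ⟨fun σ hσ ↦ hweight.trans (le_of_lt hσ), ordConnected_Ioi, ?_, ?_⟩
  · rw [← himage]
    exact continuousOn_invFunOn_of_strictAntiOn hanti_Ioo isOpen_Ioo (himage ▸ isOpen_Ioi)
  · rw [← himage]
    rintro _ ⟨x, hx, rfl⟩
    rw [hanti_Ioo.injOn.leftInvOn_invFunOn hx]
    exact isLocalMin_regModel_of_antitoneOn_regWeight hp hf hanti_Ioo.antitoneOn hx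

theorem isPersistentRegMin_regModel (hp : 0 < p) (hf : ∀ s, HasDerivAt f (f' s) s)
    (hf' : Continuous f') (h0 : f' 0 < 0) (hfa : f' a ≤ 0)
    (hanti : StrictAntiOn (regWeight f' p) (Ioc 0 a)) {α : ℝ} (hα : α ∈ Ioo 0 a) :
    IsPersistentRegMin (regModel f p) α := by
  have ha : 0 < a := hα.1.trans hα.2
  have hcurve := isMinimizerCurve_invFunOn_regWeight hp hf hf' h0 ha hfa hanti
  have hweight : 0 ≤ regWeight f' p a := div_nonneg (neg_nonneg.2 hfa) (Real.rpow_nonneg ha.le p)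
  have hαI : regWeight f' p α ∈ Ioi (regWeight f' p a) :=
    hanti (Ioo_subset_Ioc_self hα) (right_mem_Ioc.2 ha) hα.2
  obtain ⟨J, φ, hmax, hIJ, hφ⟩ := hcurve.exists_isMaximalMinimizerCurve
  refine ⟨J, φ, hmax, ⟨_, hweight, hIJ⟩, regWeight f' p α, hIJ hαI, ?_⟩
  rw [hφ hαI, (hanti.mono Ioo_subset_Ioc_self).injOn.leftInvOn_invFunOn hα]

theorem eventually_forall_isLocalMin_regModel_mem_Ioo (hp : 0 < p)
    (hf : ∀ s, HasDerivAt f (f' s) s) (hf' : Continuous f') (h0 : f' 0 < 0)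
    (hO : f' =O[cobounded ℝ] fun s ↦ |s| ^ p) {δ : ℝ} (hδ : 0 < δ) :
    ∀ᶠ σ in atTop, ∀ s, IsLocalMin (regModel f p σ) s → s ∈ Ioo 0 δ := by
  obtain ⟨ε, hε, hnegε⟩ := Metric.eventually_nhds_iff.1 (hf'.continuousAt.eventually_lt_const h0)
  obtain ⟨M, hM⟩ := exists_forall_abs_le_mul_rpow_of_isBigO hf' hO (lt_min hδ hε)
  filter_upwards [eventually_gt_atTop M, eventually_ge_atTop 0] with σ hMσ hσ s hs
  have hcrit : f' s = -(σ * (|s| ^ (p - 1) * s)) :=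
    eq_neg_of_add_eq_zero_left (add_eq_zero_of_isLocalMin_regModel hp (hf s) hs)
  have hsmall : |s| < min δ ε := by
    by_contra! hlarge
    have habs : 0 < |s| := (lt_min hδ hε).trans_le hlarge
    have hcrit_abs : |f' s| = σ * |s| ^ p := by
      rw [hcrit, abs_neg, abs_mul, abs_of_nonneg hσ, abs_mul,
        Real.abs_rpow_of_nonneg (abs_nonneg s), abs_abs, ← Real.rpow_add_one habs.ne',
        sub_add_cancel]
    exact (hM s hlarge).not_gt
      (hcrit_abs ▸ mul_lt_mul_of_pos_right hMσ (Real.rpow_pos_of_pos habs p))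
  refine ⟨?_, (le_abs_self s).trans_lt (hsmall.trans_le (min_le_left δ ε))⟩
  by_contra! hs0
  have hneg : f' s < 0 := hnegε (by simpa using hsmall.trans_le (min_le_right δ ε))
  have hpow := mul_nonpos_of_nonneg_of_nonpos (Real.rpow_nonneg (abs_nonneg s) (p - 1)) hs0
  linarith [mul_nonpos_of_nonneg_of_nonpos hσ hpow]

theorem IsMinimizerCurve.pos_of_regModel {I : Set ℝ} {ψ : ℝ → ℝ}
    (h : IsMinimizerCurve (regModel f p) I ψ) (hp : 0 < p) {d : ℝ} (hf : HasDerivAt f d 0)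
    (hd : d ≠ 0) {σ₀ : ℝ} (hσ₀ : σ₀ ∈ I) (hpos : 0 < ψ σ₀) {σ : ℝ} (hσ : σ ∈ I) : 0 < ψ σ := by
  obtain ⟨-, hconn, hcont, hmin⟩ := h
  refine pos_of_ne_zero_of_isPreconnected hconn.isPreconnected hcont (fun τ hτ hzero ↦ hd ?_)
    hσ₀ hpos hσ
  simpa using add_eq_zero_of_isLocalMin_regModel hp hf (hzero ▸ hmin τ hτ)

/- The curve inverts `regWeight`, so if it descended from a value above `a` to one below `a`, then
`regWeight` would have to be strictly decreasing across `a`. -/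
theorem IsMinimizerCurve.le_of_frequently_regWeight_le {I : Set ℝ} {ψ : ℝ → ℝ}
    (h : IsMinimizerCurve (regModel f p) I ψ) (hp : 0 < p) (hf : ∀ s, HasDerivAt f (f' s) s)
    (hpos : ∀ σ ∈ I, 0 < ψ σ)
    (hturn : regWeight f' p a ≤ 0 ∨ ∃ᶠ s in 𝓝[>] a, regWeight f' p a ≤ regWeight f' p s)
    {σ σ₁ : ℝ} (hσ : σ ∈ I) (hσ₁ : σ₁ ∈ I) (hle : σ ≤ σ₁) (hψσ₁ : ψ σ₁ ≤ a) : ψ σ ≤ a := by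
  by_contra! hlt
  obtain ⟨hI0, hconn, hcont, hmin⟩ := h
  have hsub : Icc σ σ₁ ⊆ I := hconn.out hσ hσ₁
  have hinv : LeftInvOn (regWeight f' p) ψ I := fun τ hτ ↦
    regWeight_eq_of_isLocalMin_regModel hp (hf _) (hpos τ hτ) (hmin τ hτ)
  have hanti := strictAntiOn_of_leftInvOn_of_continuousOn hle (hcont.mono hsub) (hinv.mono hsub)
    (hψσ₁.trans hlt.le)
  have hdecr {s : ℝ} (hs : s ∈ Ioc a (ψ σ)) : regWeight f' p s < regWeight f' p a :=
    hanti ⟨hψσ₁, hlt.le⟩ ⟨hψσ₁.trans hs.1.le, hs.2⟩ hs.1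
  rcases hturn with hnonpos | hincr
  · have hσ_lt := hdecr (right_mem_Ioc.2 hlt)
    rw [hinv hσ] at hσ_lt
    exact (hσ_lt.trans_le hnonpos).not_ge (hI0 hσ)
  · obtain ⟨s, hge, hs⟩ := (hincr.and_eventually (Ioc_mem_nhdsGT hlt)).exists
    exact (hdecr hs).not_ge hge

theorem IsPersistentRegMin.mem_Ioc_of_regModel {α : ℝ} (h : IsPersistentRegMin (regModel f p) α)
    (hp : 0 < p) (hf : ∀ s, HasDerivAt f (f' s) s) (hf' : Continuous f') (h0 : f' 0 < 0)
    (hO : f' =O[cobounded ℝ] fun s ↦ |s| ^ p) (ha : 0 < a)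
    (hturn : regWeight f' p a ≤ 0 ∨ ∃ᶠ s in 𝓝[>] a, regWeight f' p a ≤ regWeight f' p s) :
    α ∈ Ioc 0 a := by
  obtain ⟨I, ψ, ⟨hcurve, -⟩, ⟨c, -, hcI⟩, σ, hσ, rfl⟩ := h
  obtain ⟨σ₁, hloc, hcσ₁, hσσ₁⟩ :=
    ((eventually_forall_isLocalMin_regModel_mem_Ioo hp hf hf' h0 hO ha).and
      ((eventually_gt_atTop c).and (eventually_ge_atTop σ))).exists
  have hσ₁ : σ₁ ∈ I := hcI hcσ₁
  have hψσ₁ : ψ σ₁ ∈ Ioo 0 a := hloc _ (hcurve.2.2.2 σ₁ hσ₁)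
  have hpos : ∀ τ ∈ I, 0 < ψ τ := fun τ hτ ↦
    hcurve.pos_of_regModel hp (hf 0) h0.ne hσ₁ hψσ₁.1 hτ
  exact ⟨hpos σ hσ,
    hcurve.le_of_frequently_regWeight_le hp hf hpos hturn hσ hσ₁ hσσ₁ hψσ₁.2.le⟩

end RegModel

theorem stmt_9_general {f f' f'' : ℝ → ℝ} {p a : ℝ} (hp : 0 < p) (hf : ∀ s, HasDerivAt f (f' s) s)
    (hf' : ∀ s, HasDerivAt f' (f'' s) s) (hf'' : Continuous f'') (h0 : f' 0 < 0)
    (hO : f' =O[cobounded ℝ] fun s ↦ |s| ^ p)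
    (hleast : IsLeast {α : ℝ | 0 < α ∧ (f' α = 0 ∨ f'' α * α - p * f' α = 0)} a)
    (hsign : f' a = 0 ∨ ∀ᶠ s in 𝓝[>] a, f'' s * s - p * f' s < 0) :
    (∀ α ∈ Ioo 0 a, IsPersistentRegMin (regModel f p) α) ∧
      ∀ α, IsPersistentRegMin (regModel f p) α → α ∈ Ioc 0 a := by
  have ha : 0 < a := hleast.1.1
  have hcont : Continuous f' := continuous_iff_continuousAt.2 fun s ↦ (hf' s).continuousAt
  have hne : ∀ s ∈ Ioo 0 a, ¬(f' s = 0 ∨ f'' s * s - p * f' s = 0) := fun s hs hs0 ↦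
    (hleast.2 ⟨hs.1, hs0⟩).not_gt hs.2
  have hfa : f' a ≤ 0 := by
    by_contra! hpos
    obtain ⟨s, hs, hs0⟩ := intermediate_value_Ioo ha.le hcont.continuousOn ⟨h0, hpos⟩
    exact hne s hs (Or.inl hs0)
  have hanti : StrictAntiOn (regWeight f' p) (Ioc 0 a) :=
    strictAntiOn_regWeight hf' <| pos_on_Ioo_of_ne_zero (by fun_prop)
      (by simpa using mul_neg_of_pos_of_neg hp h0) fun s hs hs0 ↦ hne s hs (Or.inr hs0)
  have hturn : regWeight f' p a ≤ 0 ∨ ∃ᶠ s in 𝓝[>] a, regWeight f' p a ≤ regWeight f' p s :=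
    hsign.imp (fun hzero ↦ by simp [regWeight, hzero]) fun hneg ↦
      ((eventually_regWeight_lt_nhdsGT hf' ha hneg).mono fun _ ↦ le_of_lt).frequently
  exact ⟨fun α ↦ isPersistentRegMin_regModel hp hf hcont h0 hfa hanti,
    fun α hα ↦ hα.mem_Ioc_of_regModel hp hf hcont h0 hO ha hturn⟩

theorem stmt_9 (p : ℕ) (hp : 2 ≤ p) (t : Polynomial ℝ)
    (hdeg : t.natDegree = p) (h0 : t.derivative.eval 0 < 0)
    (abar : ℝ)
    (hleast : IsLeast {α : ℝ | 0 < α ∧ (t.derivative.eval α = 0 ∨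
      t.derivative.derivative.eval α * α - (p : ℝ) * t.derivative.eval α = 0)} abar)
    (hsimple :
      (t.derivative.eval abar = 0 ∧ t.derivative.derivative.eval abar ≠ 0) ∨
      ((Polynomial.X * t.derivative.derivative - (p : ℝ) • t.derivative).eval abar = 0 ∧
        ((Polynomial.X * t.derivative.derivative
          - (p : ℝ) • t.derivative).derivative).eval abar ≠ 0)) :
    (∀ α ∈ Set.Ioo 0 abar,
      IsPersistentRegMin (fun σ s => t.eval s + σ / ((p : ℝ) + 1) * |s| ^ (p + 1)) α) ∧
    (∀ α : ℝ,
      IsPersistentRegMin (fun σ s => t.eval s + σ / ((p : ℝ) + 1) * |s| ^ (p + 1)) α →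
      α ∈ Set.Ioc 0 abar) := by
  have hp0 : (0 : ℝ) < p := Nat.cast_pos.2 (by omega)
  have hdeg' : t.derivative.natDegree ≤ p := (natDegree_derivative_le t).trans (by omega)
  have hq : (fun s ↦ (X * t.derivative.derivative - (p : ℝ) • t.derivative).eval s) =
      fun s ↦ t.derivative.derivative.eval s * s - p * t.derivative.eval s := by
    funext s
    simp [mul_comm]
  have hsign := hsimple.imp And.left fun ⟨hroot, hderiv⟩ ↦
    eventually_neg_nhdsGT_of_simple_zero hleast.1.1 (by fun_prop)
      (by simpa using mul_neg_of_pos_of_neg hp0 h0)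
      (fun s hs hs0 ↦ (hleast.2 ⟨hs.1, Or.inr hs0⟩).not_gt hs.2)
      ((congrFun hq abar).symm.trans hroot) (hq ▸ Polynomial.hasDerivAt _ abar) hderiv
  simpa only [regModel_natCast] using stmt_9_general hp0 t.hasDerivAt t.derivative.hasDerivAt
    t.derivative.derivative.continuous h0 (isBigO_cobounded_abs_rpow_of_natDegree_le hdeg') hleast
    hsign
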